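/- arXiv:2104.10651 — 7 statements merged into one kernel-verified Lean document; each statement's English description precedes it below -/
import Mathlib

section
/- Let m_b be a mass function on a finite nonempty set Θ with belief function b, and let A ⊆ Θ be nonempty. Then the set of minimizers, over all mass functions m_a in the conditioning simplex M_A, of the L_1 distance ‖m_b − m_a‖_{L_1} is exactly the set { m_a ∈ M_A : m_a(B) ≥ m_b(B) for every nonempty B ⊆ A }. -/
open Finset

/-- A mass function on the finite frame `Θ`. -/
def IsMassFun {Θ : Type*} [Fintype Θ] [DecidableEq Θ] (m : Finset Θ → ℝ) : Prop :=
  m ∅ = 0 ∧ (∀ B, 0 ≤ m B) ∧ ∑ B : Finset Θ, m B = 1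

/-- The conditioning simplex `M_A`: mass functions supported on nonempty subsets of `A`. -/
def condSimplex {Θ : Type*} [Fintype Θ] [DecidableEq Θ] (A : Finset Θ) :
    Set (Finset Θ → ℝ) :=
  {m | IsMassFun m ∧ ∀ B : Finset Θ, ¬(B ≠ ∅ ∧ B ⊆ A) → m B = 0}

/-- The `L₁` distance between two mass vectors (indexed by nonempty subsets of `Θ`). -/
def dL1 {Θ : Type*} [Fintype Θ] [DecidableEq Θ] (m m' : Finset Θ → ℝ) : ℝ :=
  ∑ B ∈ Finset.univ.filter (fun B : Finset Θ => B ≠ ∅), |m B - m' B|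

/-!
Fix `A` and call the nonempty subsets of `A` inner. For `m` in `M_A` the terms of `dL1 mb m` at
sets not contained in `A` do not depend on `m`, while over the inner sets
`∑ |mb B - m B| ≥ ∑ (m B - mb B) = 1 - ∑ mb B`, with equality exactly when `mb ≤ m` there. This
lower bound is attained as soon as the positive parts of `mb` on the inner sets sum to at most `1`:
keep these positive parts and put the missing mass on a single inner set.
-/

section Sums

variable {ι G : Type*} [AddCommGroup G] [LinearOrder G] [IsOrderedAddMonoid G]
  {s : Finset ι} {f g : ι → G}

lemma sum_sub_le_sum_abs_sub : ∑ i ∈ s, (g i - f i) ≤ ∑ i ∈ s, |f i - g i| :=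
  sum_le_sum fun i _ => abs_sub_comm (g i) (f i) ▸ le_abs_self (g i - f i)

lemma sum_sub_eq_sum_abs_sub_iff :
    ∑ i ∈ s, (g i - f i) = ∑ i ∈ s, |f i - g i| ↔ ∀ i ∈ s, f i ≤ g i := by
  simp only [abs_sub_comm (f _)]
  rw [sum_eq_sum_iff_of_le fun i _ => le_abs_self (g i - f i)]
  simp only [eq_comm (b := |_|), abs_eq_self, sub_nonneg]

lemma exists_ge_sum_eq_of_sum_posPart_le (hs : s.Nonempty) {c : G}
    (hc : ∑ i ∈ s, (f i)⁺ ≤ c) :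
    ∃ g : ι → G, (∀ i, 0 ≤ g i) ∧ (∀ i ∉ s, g i = 0) ∧ ∑ i ∈ s, g i = c ∧ ∀ i ∈ s, f i ≤ g i := by
  classical
  obtain ⟨j, hj⟩ := hs
  let spare : ι → G := Pi.single j (c - ∑ i ∈ s, (f i)⁺)
  have spare_nonneg : 0 ≤ spare := Pi.single_nonneg.2 (sub_nonneg.2 hc)
  have sum_spare : ∑ i ∈ s, spare i = c - ∑ i ∈ s, (f i)⁺ := by
    rw [sum_pi_single', if_pos hj]
  refine ⟨Set.indicator s fun i => (f i)⁺ + spare i, fun i => ?_, fun i hi => ?_, ?_,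
    fun i hi => ?_⟩
  · exact Set.indicator_nonneg (fun i _ => add_nonneg (posPart_nonneg _) (spare_nonneg i)) i
  · exact Set.indicator_of_notMem (mt mem_coe.1 hi) _
  · rw [sum_indicator_subset _ Subset.rfl, sum_add_distrib, sum_spare, add_sub_cancel]
  · rw [Set.indicator_of_mem (mem_coe.2 hi)]
    exact le_add_of_le_of_nonneg (le_posPart _) (spare_nonneg i)

end Sums

section Conditioning

variable {Θ : Type*} [Fintype Θ] [DecidableEq Θ] {A : Finset Θ} {mb m : Finset Θ → ℝ}

lemma IsMassFun.sum_posPart_le_one (hm : IsMassFun m) (s : Finset (Finset Θ)) :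
    ∑ B ∈ s, (m B)⁺ ≤ 1 := by
  simp only [posPart_of_nonneg (hm.2.1 _)]
  exact (sum_le_univ_sum_of_nonneg hm.2.1).trans_eq hm.2.2

lemma mem_condSimplex_iff :
    m ∈ condSimplex A ↔ (∀ B, 0 ≤ m B) ∧ (∀ B ∉ A.powerset.erase ∅, m B = 0) ∧
      ∑ B ∈ A.powerset.erase ∅, m B = 1 := by
  have sum_eq (hsupp : ∀ B ∉ A.powerset.erase ∅, m B = 0) :
      ∑ B ∈ A.powerset.erase ∅, m B = ∑ B, m B :=
    sum_subset (subset_univ _) fun B _ => hsupp B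
  simp only [condSimplex, IsMassFun, Set.mem_ofPred_eq, ← mem_powerset, ← mem_erase]
  constructor
  · rintro ⟨⟨-, hnonneg, hsum⟩, hsupp⟩
    exact ⟨hnonneg, hsupp, (sum_eq hsupp).trans hsum⟩
  · rintro ⟨hnonneg, hsupp, hsum⟩
    exact ⟨⟨hsupp ∅ (notMem_erase ∅ _), hnonneg, (sum_eq hsupp).symm.trans hsum⟩, hsupp⟩

lemma dL1_eq_of_mem_condSimplex (hm : m ∈ condSimplex A) :
    dL1 mb m = ∑ B with ¬B ⊆ A, |mb B| + ∑ B ∈ A.powerset.erase ∅, |mb B - m B| := by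
  have outer : univ.filter (fun B => B ≠ ∅ ∧ ¬B ⊆ A) = univ.filter (¬· ⊆ A) := by
    ext B
    simp only [mem_filter_univ, and_iff_right_iff_imp]
    exact mt fun hB => hB ▸ empty_subset A
  have inner : univ.filter (fun B => B ≠ ∅ ∧ B ⊆ A) = A.powerset.erase ∅ := by
    ext B
    simp only [mem_filter_univ, mem_erase, mem_powerset]
  rw [dL1, ← sum_filter_not_add_sum_filter _ (· ⊆ A), filter_filter, filter_filter, outer, inner]
  congr 1
  refine sum_congr rfl fun B hB => ?_
  rw [hm.2 B fun h => (mem_filter_univ B).1 hB h.2, sub_zero]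

/-- The `L₁` distance from `mb` to the conditioning simplex `M_A`, provided some element of `M_A`
dominates `mb` on the nonempty subsets of `A`; in general only a lower bound for it. If `mb` is a
mass function with belief function `b`, the value is `2 * (1 - b A)`. -/
def condDist (mb : Finset Θ → ℝ) (A : Finset Θ) : ℝ :=
  ∑ B with ¬B ⊆ A, |mb B| + (1 - ∑ B ∈ A.powerset.erase ∅, mb B)

lemma condDist_eq_of_mem_condSimplex (hm : m ∈ condSimplex A) :
    condDist mb A = ∑ B with ¬B ⊆ A, |mb B| + ∑ B ∈ A.powerset.erase ∅, (m B - mb B) := by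
  rw [condDist, sum_sub_distrib, (mem_condSimplex_iff.1 hm).2.2]

lemma condDist_le_dL1 (hm : m ∈ condSimplex A) : condDist mb A ≤ dL1 mb m := by
  rw [condDist_eq_of_mem_condSimplex hm, dL1_eq_of_mem_condSimplex hm]
  grw [sum_sub_le_sum_abs_sub]

lemma condDist_eq_dL1_iff (hm : m ∈ condSimplex A) :
    condDist mb A = dL1 mb m ↔ ∀ B, B ≠ ∅ → B ⊆ A → mb B ≤ m B := by
  rw [condDist_eq_of_mem_condSimplex hm, dL1_eq_of_mem_condSimplex hm, add_right_inj,
    sum_sub_eq_sum_abs_sub_iff]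
  simp only [mem_erase, mem_powerset, and_imp]

lemma exists_mem_condSimplex_dL1_eq_condDist (hA : A.Nonempty)
    (hmb : ∑ B ∈ A.powerset.erase ∅, (mb B)⁺ ≤ 1) :
    ∃ m ∈ condSimplex A, dL1 mb m = condDist mb A := by
  have inner_nonempty : (A.powerset.erase ∅).Nonempty :=
    ⟨A, mem_erase.2 ⟨hA.ne_empty, mem_powerset_self A⟩⟩
  obtain ⟨m, hnonneg, hsupp, hsum, hdom⟩ := exists_ge_sum_eq_of_sum_posPart_le inner_nonempty hmb
  have hm : m ∈ condSimplex A := mem_condSimplex_iff.2 ⟨hnonneg, hsupp, hsum⟩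
  refine ⟨m, hm, ((condDist_eq_dL1_iff hm).2 fun B hB hBA => ?_).symm⟩
  exact hdom B (mem_erase.2 ⟨hB, mem_powerset.2 hBA⟩)

theorem stmt2_general (hA : A.Nonempty) (hmb : ∑ B ∈ A.powerset.erase ∅, (mb B)⁺ ≤ 1) :
    {ma | ma ∈ condSimplex A ∧ ∀ m' ∈ condSimplex A, dL1 mb ma ≤ dL1 mb m'} =
    {ma | ma ∈ condSimplex A ∧ ∀ B : Finset Θ, B ≠ ∅ → B ⊆ A → mb B ≤ ma B} := by
  obtain ⟨m₀, hm₀, hdist⟩ := exists_mem_condSimplex_dL1_eq_condDist hA hmb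
  ext ma
  refine and_congr_right fun hma => ?_
  rw [← condDist_eq_dL1_iff hma]
  constructor
  · intro hmin
    exact (condDist_le_dL1 hma).antisymm ((hmin m₀ hm₀).trans_eq hdist)
  · intro hattained m' hm'
    exact hattained.ge.trans (condDist_le_dL1 hm')

end Conditioning

/-- the minimizers over the conditioning simplex `M_A` of the `L₁` distance to
`mb` are exactly the elements of `M_A` whose mass dominates that of `mb` on every nonempty
subset of `A`. -/
theorem stmt2 {Θ : Type*} [Fintype Θ] [DecidableEq Θ] [Nonempty Θ]
    (mb : Finset Θ → ℝ) (hmb : IsMassFun mb)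
    (A : Finset Θ) (hA : A.Nonempty) :
    {ma | ma ∈ condSimplex A ∧ ∀ m' ∈ condSimplex A, dL1 mb ma ≤ dL1 mb m'} =
    {ma | ma ∈ condSimplex A ∧ ∀ B : Finset Θ, B ≠ ∅ → B ⊆ A → mb B ≤ ma B} :=
  stmt2_general hA (hmb.sum_posPart_le_one _)
end

section
/- Let m_b be a mass function on a finite nonempty set Θ with belief function b, and let A ⊆ Θ be nonempty. The set { m_a ∈ M_A : m_a(B) ≥ m_b(B) for every nonempty B ⊆ A } of L_1 conditional mass functions equals the convex hull of the 2^{|A|} − 1 points { v_B : ∅ ≠ B ⊆ A }, where the vertex v_B is the function on nonempty subsets of Θ defined by v_B(B) = m_b(B) + 1 − b(A) = m_b(B) + pl(A^c), v_B(X) = m_b(X) for every nonempty X ⊆ A with X ≠ B, and v_B(X) = 0 for every X ⊄ A. -/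
open Finset

/-- Belief value `b(A) = ∑_{B ⊆ A} m(B)`. -/
def bel {Θ : Type*} [Fintype Θ] [DecidableEq Θ] (m : Finset Θ → ℝ) (A : Finset Θ) : ℝ :=
  ∑ B ∈ A.powerset, m B

/-- Plausibility value `pl(A) = ∑_{B ∩ A ≠ ∅} m(B)`. -/
def plaus {Θ : Type*} [Fintype Θ] [DecidableEq Θ] (m : Finset Θ → ℝ) (A : Finset Θ) : ℝ :=
  ∑ B ∈ Finset.univ.filter (fun B : Finset Θ => (B ∩ A).Nonempty), m B

/-- The vertex `v_B` of the `L₁` conditional simplex: it adds `1 - b(A)` to the mass of `B`,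
keeps the mass of the other nonempty subsets of `A`, and vanishes elsewhere. -/
def vertexL1 {Θ : Type*} [Fintype Θ] [DecidableEq Θ] (mb : Finset Θ → ℝ) (A B : Finset Θ) :
    Finset Θ → ℝ :=
  fun X => if X = B then mb B + 1 - bel mb A
           else if X ≠ ∅ ∧ X ⊆ A then mb X else 0

/-!
A conditional mass function dominating `m_b` on the nonempty subsets of `A` is the restriction of
`m_b` to those subsets plus a nonnegative function on them of total mass `r = 1 - b(A)`. These
functions therefore form the standard simplex on the nonempty subsets of `A`, dilated by `r` and
translated by the restriction of `m_b`; the vertex `r • e_B` of the dilated simplex goes to `v_B`.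
-/

section ConvexHull

open scoped Pointwise

variable {𝕜 ι : Type*} [Field 𝕜] [LinearOrder 𝕜] [IsStrictOrderedRing 𝕜] [Fintype ι]
  [DecidableEq ι]

theorem convexHull_image_single_one_eq (S : Set ι) :
    convexHull 𝕜 ((fun i ↦ Pi.single i (1 : 𝕜)) '' S) =
      {w | w ∈ stdSimplex 𝕜 ι ∧ ∀ i ∉ S, w i = 0} := by
  apply Set.Subset.antisymm
  · have hconv : Convex 𝕜 (stdSimplex 𝕜 ι ∩ Sᶜ.pi fun _ ↦ {0}) :=
      (convex_stdSimplex 𝕜 ι).inter (convex_pi fun _ _ ↦ convex_singleton 0)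
    refine convexHull_min ?_ hconv
    rintro _ ⟨i, hi, rfl⟩
    exact ⟨single_mem_stdSimplex 𝕜 i, fun j hj ↦
      Pi.single_eq_of_ne (ne_of_mem_of_not_mem hi hj).symm 1⟩
  · rintro w ⟨⟨hw_nonneg, hw_sum⟩, hw_off⟩
    classical
    have hsum : ∑ i ∈ univ with i ∈ S, w i = 1 := by
      rw [sum_filter_of_ne fun i _ hi ↦ not_imp_comm.1 (hw_off i) hi, hw_sum]
    have hw : w = ∑ i ∈ univ with i ∈ S, w i • Pi.single i (1 : 𝕜) := by
      rw [sum_filter_of_ne fun i _ hi ↦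
        not_imp_comm.1 (hw_off i) (left_ne_zero_of_smul hi)]
      exact pi_eq_sum_univ' w
    rw [hw]
    exact (convex_convexHull 𝕜 _).sum_mem (fun i _ ↦ hw_nonneg i) hsum fun i hi ↦
      subset_convexHull 𝕜 _ ⟨i, (mem_filter.1 hi).2, rfl⟩

theorem convexHull_image_single_eq {S : Set ι} (hS : S.Nonempty) {r : 𝕜} (hr : 0 ≤ r) :
    convexHull 𝕜 ((fun i ↦ Pi.single i r) '' S) =
      {x | (∀ i, 0 ≤ x i) ∧ ∑ i, x i = r ∧ ∀ i ∉ S, x i = 0} := by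
  obtain rfl | hr := hr.eq_or_lt
  · ext x
    simp only [Pi.single_zero, hS.image_const, convexHull_singleton, Set.mem_singleton_iff,
      Set.mem_ofPred_eq]
    refine ⟨by rintro rfl; simp, fun ⟨hx, hsum, _⟩ ↦ ?_⟩
    exact (Fintype.sum_eq_zero_iff_of_nonneg hx).1 hsum
  · have hscale : (fun i ↦ Pi.single i r) '' S = r • ((fun i ↦ Pi.single i (1 : 𝕜)) '' S) := by
      simp only [← Set.image_smul, Set.image_image, ← Pi.single_smul, smul_eq_mul, mul_one]
    ext x
    rw [hscale, convexHull_smul, convexHull_image_single_one_eq,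
      Set.mem_smul_set_iff_inv_smul_mem₀ hr.ne']
    simp [stdSimplex, ← mul_sum, inv_mul_eq_one₀ hr.ne', hr, hr.ne', eq_comm, and_assoc]

theorem convexHull_image_add_single_eq {S : Set ι} (hS : S.Nonempty) (c : ι → 𝕜) {r : 𝕜}
    (hr : 0 ≤ r) :
    convexHull 𝕜 ((fun i ↦ c + Pi.single i r) '' S) =
      {x | (∀ i, c i ≤ x i) ∧ ∑ i, x i = ∑ i, c i + r ∧ ∀ i ∉ S, x i = c i} := by
  have htranslate : (fun i ↦ c + Pi.single i r) '' S = c +ᵥ ((fun i ↦ Pi.single i r) '' S) := by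
    simp only [← Set.image_vadd, Set.image_image, vadd_eq_add]
  ext x
  rw [htranslate, convexHull_vadd, convexHull_image_single_eq hS hr,
    Set.mem_vadd_set_iff_neg_vadd_mem]
  simp [neg_add_eq_sub, sub_eq_iff_eq_add']

end ConvexHull

section MassFun

variable {Θ : Type*} [Fintype Θ] [DecidableEq Θ] {m : Finset Θ → ℝ} {A B : Finset Θ}

/-- The possible focal elements of a mass function conditioned on `A`: the nonempty subsets
of `A`. They index the vertices of the `L₁` conditional simplex. -/
def focalSets (A : Finset Θ) : Set (Finset Θ) :=
  {B | B ≠ ∅ ∧ B ⊆ A}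

theorem bel_add_plaus_compl (m : Finset Θ → ℝ) (A : Finset Θ) :
    bel m A + plaus m Aᶜ = ∑ B, m B := by
  have hpowerset : A.powerset = univ.filter fun B ↦ ¬(B ∩ Aᶜ).Nonempty := by
    ext B
    simp [not_nonempty_iff_eq_empty, ← disjoint_iff_inter_eq_empty, disjoint_compl_right_iff]
  rw [bel, plaus, hpowerset, add_comm, sum_filter_add_sum_filter_not]

theorem sum_indicator_focalSets (h0 : m ∅ = 0) (A : Finset Θ) :
    ∑ B, (focalSets A).indicator m B = bel m A := by
  have hind : (focalSets A).indicator m = (A.powerset : Set (Finset Θ)).indicator m := by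
    ext B
    obtain rfl | hB := eq_or_ne B ∅
    · simp [focalSets, h0]
    · simp [focalSets, Set.indicator, hB]
  rw [hind, bel, sum_indicator_subset m (subset_univ _)]

theorem IsMassFun.one_sub_bel (hm : IsMassFun m) (A : Finset Θ) :
    1 - bel m A = plaus m Aᶜ := by
  rw [← hm.2.2, ← bel_add_plaus_compl m A, add_sub_cancel_left]

theorem IsMassFun.bel_le_one (hm : IsMassFun m) (A : Finset Θ) : bel m A ≤ 1 := by
  have hpl : 0 ≤ plaus m Aᶜ := sum_nonneg fun B _ ↦ hm.2.1 B
  linarith [hm.one_sub_bel A]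

theorem vertexL1_eq_indicator_add_single (m : Finset Θ → ℝ) (hB : B ∈ focalSets A) :
    vertexL1 m A B = (focalSets A).indicator m + Pi.single B (1 - bel m A) := by
  ext X
  obtain rfl | hX := eq_or_ne X B
  · simp [vertexL1, Set.indicator_of_mem hB, add_sub_assoc]
  · simp [vertexL1, hX, Set.indicator, focalSets]

theorem mem_condSimplex_and_le_iff (hm : ∀ B ∈ focalSets A, 0 ≤ m B) {ma : Finset Θ → ℝ} :
    (ma ∈ condSimplex A ∧ ∀ B, B ≠ ∅ → B ⊆ A → m B ≤ ma B) ↔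
      (∀ B, (focalSets A).indicator m B ≤ ma B) ∧ ∑ B, ma B = 1 ∧
        ∀ B ∉ focalSets A, ma B = (focalSets A).indicator m B := by
  constructor
  · rintro ⟨⟨⟨-, hnonneg, hsum⟩, hoff⟩, hle⟩
    refine ⟨fun B ↦ ?_, hsum, fun B hB ↦ ?_⟩
    · exact Set.indicator_apply_le' (fun hB ↦ hle B hB.1 hB.2) fun _ ↦ hnonneg B
    · rw [hoff B hB, Set.indicator_of_notMem hB]
  · rintro ⟨hle, hsum, hoff⟩
    have hoff_zero : ∀ B ∉ focalSets A, ma B = 0 := fun B hB ↦ by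
      rw [hoff B hB, Set.indicator_of_notMem hB]
    have hnonneg (B : Finset Θ) : 0 ≤ ma B :=
      (Set.indicator_nonneg hm B).trans (hle B)
    refine ⟨⟨⟨hoff_zero ∅ fun h ↦ h.1 rfl, hnonneg, hsum⟩, hoff_zero⟩, fun B hB hBA ↦ ?_⟩
    exact (Set.indicator_of_mem (show B ∈ focalSets A from ⟨hB, hBA⟩) m).symm.trans_le (hle B)

theorem setOf_vertexL1_eq_image (m : Finset Θ → ℝ) (A : Finset Θ) :
    {v | ∃ B : Finset Θ, B ≠ ∅ ∧ B ⊆ A ∧ v = vertexL1 m A B} =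
      (fun B ↦ (focalSets A).indicator m + Pi.single B (1 - bel m A)) '' focalSets A := by
  rw [← Set.image_congr fun B hB ↦ vertexL1_eq_indicator_add_single m hB]
  ext v
  simp [focalSets, eq_comm, and_assoc]

end MassFun

/-- the set of `L₁` conditional mass functions
`{ma ∈ M_A : ma(B) ≥ mb(B) ∀ ∅ ≠ B ⊆ A}` equals the convex hull of the `2^{|A|} - 1`
vertices `v_B`, `∅ ≠ B ⊆ A`; moreover `1 - b(A) = pl(Aᶜ)`. -/
theorem stmt3 {Θ : Type*} [Fintype Θ] [DecidableEq Θ] [Nonempty Θ]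
    (mb : Finset Θ → ℝ) (hmb : IsMassFun mb)
    (A : Finset Θ) (hA : A.Nonempty) :
    (1 - bel mb A = plaus mb Aᶜ) ∧
    {ma | ma ∈ condSimplex A ∧ ∀ B : Finset Θ, B ≠ ∅ → B ⊆ A → mb B ≤ ma B} =
      convexHull ℝ {v | ∃ B : Finset Θ, B ≠ ∅ ∧ B ⊆ A ∧ v = vertexL1 mb A B} := by
  refine ⟨hmb.one_sub_bel A, ?_⟩
  have hfocal : (focalSets A).Nonempty := ⟨A, hA.ne_empty, Subset.rfl⟩
  have hslack : 0 ≤ 1 - bel mb A := sub_nonneg.2 (hmb.bel_le_one A)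
  rw [setOf_vertexL1_eq_image, convexHull_image_add_single_eq hfocal _ hslack,
    sum_indicator_focalSets hmb.1, add_sub_cancel]
  ext ma
  exact mem_condSimplex_and_le_iff fun B _ ↦ hmb.2.1 B
end

section
/- Let m_b be a mass function on a finite nonempty set Θ with belief function b, let A ⊆ Θ be nonempty, and for each nonempty B ⊆ A define v_B on nonempty subsets of Θ by v_B(B) = m_b(B) + 1 − b(A), v_B(X) = m_b(X) for nonempty X ⊆ A with X ≠ B, and v_B(X) = 0 for X ⊄ A. Then every v_B is itself a mass function (all its values are nonnegative and they sum to 1), hence each vertex of the L_1 conditional simplex lies in the conditioning simplex M_A. -/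
open Finset

/-! `v_B` is the restriction of `m_b` to the subsets of `A` with the missing mass `1 - b(A)` put on
top of `B`. That surplus is nonnegative because `b(A) ≤ 1`, and it brings the total back to
`b(A) + (1 - b(A)) = 1`. -/

section VertexL1

variable {Θ : Type*} [Fintype Θ] [DecidableEq Θ] {m : Finset Θ → ℝ} {A B : Finset Θ}

theorem IsMassFun.vertexL1_nonneg (hm : IsMassFun m) (A B X : Finset Θ) :
    0 ≤ vertexL1 m A B X := by
  have hnonneg : ∀ Y, 0 ≤ m Y := hm.2.1
  unfold vertexL1
  split_ifs
  · linarith [hnonneg B, hm.bel_le_one A]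
  · exact hnonneg X
  · exact le_rfl

theorem vertexL1_eq_ite_add_single (hm : m ∅ = 0) (hBA : B ⊆ A) (X : Finset Θ) :
    vertexL1 m A B X =
      (if X ∈ A.powerset then m X else 0) + (Pi.single B (1 - bel m A) : Finset Θ → ℝ) X := by
  rcases eq_or_ne X B with rfl | hXB
  · simp only [vertexL1, if_true, mem_powerset, hBA, Pi.single_eq_same]
    ring
  · rcases eq_or_ne X ∅ with rfl | hX
    · simp [vertexL1, hXB, hm]
    · simp [vertexL1, hXB, hX]

theorem sum_vertexL1 (hm : m ∅ = 0) (hBA : B ⊆ A) : ∑ X, vertexL1 m A B X = 1 := by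
  calc
    ∑ X, vertexL1 m A B X
        = ∑ X, (if X ∈ A.powerset then m X else 0) +
            ∑ X, (Pi.single B (1 - bel m A) : Finset Θ → ℝ) X := by
      simp only [vertexL1_eq_ite_add_single hm hBA, sum_add_distrib]
    _ = bel m A + (1 - bel m A) := by
      rw [sum_ite_mem, univ_inter, Fintype.sum_pi_single', bel]
    _ = 1 := add_sub_cancel _ _

theorem vertexL1_eq_zero (hB : B ≠ ∅) (hBA : B ⊆ A) {X : Finset Θ} (hX : ¬(X ≠ ∅ ∧ X ⊆ A)) :
    vertexL1 m A B X = 0 := by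
  have hXB : X ≠ B := by
    rintro rfl
    exact hX ⟨hB, hBA⟩
  rw [vertexL1, if_neg hXB, if_neg hX]

theorem isMassFun_vertexL1 (hm : IsMassFun m) (hB : B ≠ ∅) (hBA : B ⊆ A) :
    IsMassFun (vertexL1 m A B) :=
  ⟨vertexL1_eq_zero hB hBA fun h => h.1 rfl, hm.vertexL1_nonneg A B, sum_vertexL1 hm.1 hBA⟩

end VertexL1

/-- every vertex `v_B` (`∅ ≠ B ⊆ A`) of the `L₁` conditional simplex is itself a
mass function — its values are nonnegative and sum to 1 — hence it lies in the conditioning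
simplex `M_A`. -/
theorem stmt4 {Θ : Type*} [Fintype Θ] [DecidableEq Θ] [Nonempty Θ]
    (mb : Finset Θ → ℝ) (hmb : IsMassFun mb)
    (A : Finset Θ) (hA : A.Nonempty)
    (B : Finset Θ) (hBne : B ≠ ∅) (hBA : B ⊆ A) :
    (∀ X : Finset Θ, 0 ≤ vertexL1 mb A B X) ∧
    (∑ X : Finset Θ, vertexL1 mb A B X = 1) ∧
    vertexL1 mb A B ∈ condSimplex A := by
  have hv : IsMassFun (vertexL1 mb A B) := isMassFun_vertexL1 hmb hBne hBA
  exact ⟨hv.2.1, hv.2.2, hv, fun _ hX => vertexL1_eq_zero hBne hBA hX⟩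
end

section
/- Let m_b be a mass function on a finite nonempty set Θ, and let A ⊆ Θ be nonempty with A ≠ Θ. Suppose max_{C⊄A} m_b(C) < (1/(2^{|A|}−1)) Σ_{C⊄A} m_b(C). Then the L_∞ distance from m_b to the affine subspace V_A of signed mass assignments supported in A and summing to 1 has a unique minimizer, given by B ↦ m_b(B) + (1/(2^{|A|}−1)) Σ_{C⊄A} m_b(C) for every nonempty B ⊆ A and 0 for B ⊄ A; this coincides with the L_2 conditional mass function of m_b given A. -/
open Finset

/-- The affine subspace `V_A` of signed mass assignments supported on nonempty subsets of `A`
and summing to 1. -/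
def affineVA {Θ : Type*} [Fintype Θ] [DecidableEq Θ] (A : Finset Θ) :
    Set (Finset Θ → ℝ) :=
  {α | α ∅ = 0 ∧ (∀ B : Finset Θ, ¬ B ⊆ A → α B = 0) ∧
    ∑ B ∈ A.powerset.filter (fun B => B ≠ ∅), α B = 1}

/-- The `L∞` distance between two mass vectors (indexed by the nonempty subsets of `Θ`). -/
noncomputable def dLinf {Θ : Type*} [Fintype Θ] [DecidableEq Θ] [Nonempty Θ]
    (α α' : Finset Θ → ℝ) : ℝ :=
  (Finset.univ.filter fun B : Finset Θ => B ≠ ∅).sup'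
    (by
      obtain ⟨θ⟩ := ‹Nonempty Θ›
      exact ⟨{θ}, by simp⟩)
    fun B => |α B - α' B|

/-- `max_{C ⊄ A} mb C`, well defined when `A ≠ Θ`. -/
noncomputable def maxOut {Θ : Type*} [Fintype Θ] [DecidableEq Θ]
    (mb : Finset Θ → ℝ) (A : Finset Θ) (h : A ≠ Finset.univ) : ℝ :=
  (Finset.univ.filter fun C : Finset Θ => ¬ C ⊆ A).sup'
    (by
      obtain ⟨θ, hθ⟩ : ∃ θ, θ ∉ A := by
        by_contra hc
        push_neg at hc
        exact h (Finset.eq_univ_iff_forall.mpr hc)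
      exact ⟨{θ}, by simp [hθ]⟩)
    mb

/-- `∑_{C ⊄ A} mb C`. -/
def sumOut {Θ : Type*} [Fintype Θ] [DecidableEq Θ] (mb : Finset Θ → ℝ) (A : Finset Θ) : ℝ :=
  ∑ C ∈ Finset.univ.filter (fun C : Finset Θ => ¬ C ⊆ A), mb C

/-- The candidate unique `L∞` minimizer: redistribute `∑_{C⊄A} mb C` equally among the
nonempty subsets of `A`. -/
noncomputable def mLinfStar {Θ : Type*} [Fintype Θ] [DecidableEq Θ]
    (mb : Finset Θ → ℝ) (A : Finset Θ) : Finset Θ → ℝ :=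
  fun B => if B ≠ ∅ ∧ B ⊆ A then mb B + sumOut mb A / ((2 : ℝ) ^ A.card - 1) else 0

/-! Every `α ∈ V_A` exceeds `mb` by the same total amount `sumOut mb A` on the `2 ^ |A| - 1`
nonempty subsets of `A`. Hence the largest excess is at least the average one, `outShare mb A`, and
equals it only if the excess is constant, that is, only if `α = mLinfStar mb A`. For this `α` the
distance is at most the average, because an entry off `A` contributes `|mb C| ≤ outShare mb A`. -/

theorem cast_card_filter_powerset_ne_empty {Θ R : Type*} [DecidableEq Θ] [Ring R] (A : Finset Θ) :
    (#{B ∈ A.powerset | B ≠ ∅} : R) = 2 ^ #A - 1 := by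
  rw [filter_ne', cast_card_erase_of_mem (empty_mem_powerset A), card_powerset]
  norm_cast

section

variable {Θ : Type*} [Fintype Θ] [DecidableEq Θ] {mb α β : Finset Θ → ℝ} {A B : Finset Θ}

/-- The share of the mass lying outside `A` that each nonempty subset of `A` receives when this mass
is split equally among them. For `A = ∅` it is `0`, since the division is then by `0`. -/
noncomputable def outShare (mb : Finset Θ → ℝ) (A : Finset Θ) : ℝ :=
  sumOut mb A / ((2 : ℝ) ^ #A - 1)

theorem bel_add_sumOut (mb : Finset Θ → ℝ) (A : Finset Θ) :
    bel mb A + sumOut mb A = ∑ B, mb B := by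
  rw [bel, sumOut, ← filter_subset_univ, sum_filter_add_sum_filter_not]

theorem sum_filter_powerset_ne_empty (hmb0 : mb ∅ = 0) (A : Finset Θ) :
    ∑ B ∈ A.powerset with B ≠ ∅, mb B = bel mb A :=
  sum_filter_of_ne fun _ _ hB h => hB (h ▸ hmb0)

theorem sum_add_outShare (hmb0 : mb ∅ = 0) (hA : A.Nonempty) :
    ∑ B ∈ A.powerset with B ≠ ∅, (mb B + outShare mb A) = ∑ B, mb B := by
  have hcard : (2 : ℝ) ^ #A - 1 ≠ 0 :=
    (sub_pos.2 (one_lt_pow₀ one_lt_two hA.card_ne_zero)).ne'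
  rw [sum_add_distrib, sum_filter_powerset_ne_empty hmb0, sum_const, nsmul_eq_mul,
    cast_card_filter_powerset_ne_empty, outShare, mul_div_cancel₀ _ hcard, bel_add_sumOut]

theorem outShare_nonneg_of_abs_le (hout : ∀ C, ¬ C ⊆ A → |mb C| ≤ outShare mb A) :
    0 ≤ outShare mb A := by
  by_cases hA : A = univ
  · simp [outShare, sumOut, hA]
  · exact (abs_nonneg _).trans (hout univ fun h => hA (univ_subset_iff.1 h))

theorem le_maxOut (hA : A ≠ univ) (hB : ¬ B ⊆ A) : mb B ≤ maxOut mb A hA :=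
  le_sup' mb (by simpa using hB)

theorem dLinf_le_iff [Nonempty Θ] {d : ℝ} :
    dLinf α β ≤ d ↔ ∀ B, B ≠ ∅ → |α B - β B| ≤ d := by
  simp [dLinf]

theorem eq_of_mem_affineVA (hα : α ∈ affineVA A) (hβ : β ∈ affineVA A)
    (h : ∀ B, B ≠ ∅ → B ⊆ A → α B = β B) : α = β := by
  funext B
  by_cases hB : B = ∅
  · rw [hB, hα.1, hβ.1]
  by_cases hBA : B ⊆ A
  · exact h B hB hBA
  · rw [hα.2.1 B hBA, hβ.2.1 B hBA]

theorem mLinfStar_of_subset (hB : B ≠ ∅) (hBA : B ⊆ A) :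
    mLinfStar mb A B = mb B + outShare mb A :=
  if_pos ⟨hB, hBA⟩

theorem mLinfStar_of_not_subset (hBA : ¬ B ⊆ A) : mLinfStar mb A B = 0 :=
  if_neg fun h => hBA h.2

theorem mLinfStar_mem_affineVA (hmb0 : mb ∅ = 0) (hmbsum : ∑ B, mb B = 1) (hA : A.Nonempty) :
    mLinfStar mb A ∈ affineVA A := by
  refine ⟨if_neg fun h => h.1 rfl, fun B => mLinfStar_of_not_subset, ?_⟩
  rw [← hmbsum, ← sum_add_outShare hmb0 hA]
  refine sum_congr rfl fun B hB => ?_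
  obtain ⟨hBA, hB0⟩ := mem_filter.1 hB
  exact mLinfStar_of_subset hB0 (mem_powerset.1 hBA)

theorem mLinfStar_eq_one_sub_bel (hmbsum : ∑ B, mb B = 1) :
    mLinfStar mb A = fun B =>
      if B ≠ ∅ ∧ B ⊆ A then mb B + (1 - bel mb A) / ((2 : ℝ) ^ #A - 1) else 0 := by
  have hsumOut : sumOut mb A = 1 - bel mb A :=
    eq_sub_of_add_eq' ((bel_add_sumOut mb A).trans hmbsum)
  rw [← hsumOut]
  rfl

variable [Nonempty Θ]

theorem dLinf_mLinfStar_le (hout : ∀ C, ¬ C ⊆ A → |mb C| ≤ outShare mb A) :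
    dLinf mb (mLinfStar mb A) ≤ outShare mb A := by
  refine dLinf_le_iff.2 fun B hB => ?_
  by_cases hBA : B ⊆ A
  · rw [mLinfStar_of_subset hB hBA, sub_add_cancel_left, abs_neg,
      abs_of_nonneg (outShare_nonneg_of_abs_le hout)]
  · rw [mLinfStar_of_not_subset hBA, sub_zero]
    exact hout B hBA

theorem le_add_of_dLinf_le {d : ℝ} (hd : dLinf mb α ≤ d) (hB : B ≠ ∅) : α B ≤ mb B + d :=
  sub_le_iff_le_add'.1 (abs_sub_le_iff.1 (dLinf_le_iff.1 hd B hB)).2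

theorem outShare_le_dLinf (hmb0 : mb ∅ = 0) (hmbsum : ∑ B, mb B = 1) (hA : A.Nonempty)
    (hα : α ∈ affineVA A) : outShare mb A ≤ dLinf mb α := by
  have hne : {B ∈ A.powerset | B ≠ ∅}.Nonempty := ⟨A, by simp [hA.ne_empty]⟩
  have hsum := (sum_add_outShare hmb0 hA).trans (hmbsum.trans hα.2.2.symm)
  obtain ⟨B, hB, hle⟩ := exists_le_of_sum_le hne hsum.le
  exact le_of_add_le_add_left (hle.trans (le_add_of_dLinf_le le_rfl (mem_filter.1 hB).2))

theorem eq_mLinfStar_of_dLinf_le (hmb0 : mb ∅ = 0) (hmbsum : ∑ B, mb B = 1) (hA : A.Nonempty)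
    (hα : α ∈ affineVA A) (hd : dLinf mb α ≤ outShare mb A) : α = mLinfStar mb A := by
  have hsum := hα.2.2.trans (hmbsum.symm.trans (sum_add_outShare hmb0 hA).symm)
  have heq : ∀ B ∈ {B ∈ A.powerset | B ≠ ∅}, α B = mb B + outShare mb A :=
    (sum_eq_sum_iff_of_le fun B hB => le_add_of_dLinf_le hd (mem_filter.1 hB).2).1 hsum
  refine eq_of_mem_affineVA hα (mLinfStar_mem_affineVA hmb0 hmbsum hA) fun B hB hBA => ?_
  rw [mLinfStar_of_subset hB hBA, heq B (mem_filter.2 ⟨mem_powerset.2 hBA, hB⟩)]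

end

theorem stmt8_general {Θ : Type*} [Fintype Θ] [DecidableEq Θ] [Nonempty Θ]
    (mb : Finset Θ → ℝ) (hmb0 : mb ∅ = 0) (hmbsum : ∑ B : Finset Θ, mb B = 1)
    (A : Finset Θ) (hA : A.Nonempty)
    (hout : ∀ C, ¬ C ⊆ A → |mb C| ≤ sumOut mb A / ((2 : ℝ) ^ #A - 1)) :
    mLinfStar mb A ∈ affineVA A ∧
    (∀ α ∈ affineVA A, dLinf mb (mLinfStar mb A) ≤ dLinf mb α) ∧
    (∀ α ∈ affineVA A, (∀ α' ∈ affineVA A, dLinf mb α ≤ dLinf mb α') → α = mLinfStar mb A) ∧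
    mLinfStar mb A = fun B =>
      if B ≠ ∅ ∧ B ⊆ A then mb B + (1 - bel mb A) / ((2 : ℝ) ^ #A - 1) else 0 := by
  have hmem := mLinfStar_mem_affineVA hmb0 hmbsum hA
  have hdist : dLinf mb (mLinfStar mb A) ≤ outShare mb A := dLinf_mLinfStar_le hout
  refine ⟨hmem, fun α hα => ?_, fun α hα hmin => ?_, mLinfStar_eq_one_sub_bel hmbsum⟩
  · exact hdist.trans (outShare_le_dLinf hmb0 hmbsum hA hα)
  · exact eq_mLinfStar_of_dLinf_le hmb0 hmbsum hA hα ((hmin _ hmem).trans hdist)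

/-- when `max_{C⊄A} mb C < (∑_{C⊄A} mb C)/(2^{|A|}-1)`, the `L∞` distance from
`mb` to the affine subspace `V_A` has a unique minimizer, namely `mLinfStar mb A`, which
coincides with the `L₂` conditional mass function of `mb` given `A`. -/
theorem stmt8 {Θ : Type*} [Fintype Θ] [DecidableEq Θ] [Nonempty Θ]
    (mb : Finset Θ → ℝ)
    (hmb0 : mb ∅ = 0) (hmbnn : ∀ B, 0 ≤ mb B) (hmbsum : ∑ B : Finset Θ, mb B = 1)
    (A : Finset Θ) (hA : A.Nonempty) (hAuniv : A ≠ Finset.univ)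
    (hcase : maxOut mb A hAuniv < sumOut mb A / ((2 : ℝ) ^ A.card - 1)) :
    mLinfStar mb A ∈ affineVA A ∧
    (∀ α ∈ affineVA A, dLinf mb (mLinfStar mb A) ≤ dLinf mb α) ∧
    (∀ α ∈ affineVA A, (∀ α' ∈ affineVA A, dLinf mb α ≤ dLinf mb α') → α = mLinfStar mb A) ∧
    mLinfStar mb A = fun B =>
      if B ≠ ∅ ∧ B ⊆ A then mb B + (1 - bel mb A) / ((2 : ℝ) ^ A.card - 1) else 0 :=
  stmt8_general mb hmb0 hmbsum A hA fun C hC =>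
    (abs_of_nonneg (hmbnn C)).trans_le ((le_maxOut hAuniv hC).trans hcase.le)
end

section
/- Let n ≥ 1 and k ≥ 0 be given, and define f : ℝⁿ → ℝ by f(x) = Σ_{i=1}^n |x_i| + |Σ_{i=1}^n x_i + k|. Then the minimum value of f over ℝⁿ is k, and the set of minimizers of f is exactly the simplex { x ∈ ℝⁿ : x_i ≤ 0 for all i, and Σ_{i=1}^n x_i ≥ −k }. -/
open Finset

/-!
Since `|a| + a = 2 a⁺` and `|b| - b = 2 b⁻`, the objective exceeds `k` by exactly
`2 (∑ xᵢ⁺ + (∑ xᵢ + k)⁻)`. This excess is nonnegative, and it vanishes iff every `xᵢ⁺` and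
`(∑ xᵢ + k)⁻` do, which are the inequalities defining the simplex.
-/

theorem forall_le_iff_eq_of_isLeast_range {α β : Type*} [PartialOrder β] {f : α → β} {m : β}
    (hm : IsLeast (Set.range f) m) {x : α} : (∀ y, f x ≤ f y) ↔ f x = m := by
  obtain ⟨⟨z, hz⟩, hlower⟩ := hm
  constructor
  · intro hx
    exact ((hx z).trans_eq hz).antisymm (hlower ⟨x, rfl⟩)
  · intro hx y
    exact hx.trans_le (hlower ⟨y, rfl⟩)

section OrderedGroup

variable {ι G : Type*} [AddCommGroup G] [LinearOrder G] [IsOrderedAddMonoid G]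

theorem sum_abs_add_abs_sum_add_eq (s : Finset ι) (x : ι → G) (k : G) :
    (∑ i ∈ s, |x i|) + |(∑ i ∈ s, x i) + k| =
      k + 2 • ((∑ i ∈ s, (x i)⁺) + ((∑ i ∈ s, x i) + k)⁻) := by
  have hpos : 2 • ∑ i ∈ s, (x i)⁺ = (∑ i ∈ s, |x i|) + ∑ i ∈ s, x i := by
    simp only [smul_sum, ← abs_add_eq_two_nsmul_posPart, sum_add_distrib]
  rw [nsmul_add, hpos, ← abs_sub_eq_two_nsmul_negPart]
  abel

theorem le_sum_abs_add_abs_sum_add (s : Finset ι) (x : ι → G) (k : G) :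
    k ≤ (∑ i ∈ s, |x i|) + |(∑ i ∈ s, x i) + k| := by
  rw [sum_abs_add_abs_sum_add_eq]
  exact le_add_of_nonneg_right <| nsmul_nonneg
    (add_nonneg (sum_nonneg fun i _ => posPart_nonneg (x i)) (negPart_nonneg _)) 2

theorem sum_abs_add_abs_sum_add_eq_iff {s : Finset ι} {x : ι → G} {k : G} :
    (∑ i ∈ s, |x i|) + |(∑ i ∈ s, x i) + k| = k ↔
      (∀ i ∈ s, x i ≤ 0) ∧ -k ≤ ∑ i ∈ s, x i := by
  have hpos : ∀ i ∈ s, 0 ≤ (x i)⁺ := fun i _ => posPart_nonneg (x i)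
  rw [sum_abs_add_abs_sum_add_eq, add_eq_left, two_nsmul_eq_zero,
    add_eq_zero_iff_of_nonneg (sum_nonneg hpos) (negPart_nonneg _),
    sum_eq_zero_iff_of_nonneg hpos]
  simp only [posPart_eq_zero, negPart_eq_zero, neg_le_iff_add_nonneg]

theorem isLeast_range_sum_abs_add_abs_sum_add [Fintype ι] {k : G} (hk : 0 ≤ k) :
    IsLeast (Set.range fun x : ι → G => (∑ i, |x i|) + |(∑ i, x i) + k|) k := by
  refine ⟨⟨0, sum_abs_add_abs_sum_add_eq_iff.mpr ?_⟩, ?_⟩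
  · simpa using hk
  · rintro _ ⟨x, rfl⟩
    exact le_sum_abs_add_abs_sum_add univ x k

theorem stmt11_general [Fintype ι] {k : G} (hk : 0 ≤ k) :
    IsLeast (Set.range fun x : ι → G => (∑ i, |x i|) + |(∑ i, x i) + k|) k ∧
    {x : ι → G |
        ∀ y : ι → G,
          (∑ i, |x i|) + |(∑ i, x i) + k| ≤ (∑ i, |y i|) + |(∑ i, y i) + k|} =
      {x : ι → G | (∀ i, x i ≤ 0) ∧ -k ≤ ∑ i, x i} := by
  have hmin := isLeast_range_sum_abs_add_abs_sum_add (ι := ι) hk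
  refine ⟨hmin, Set.ext fun x => ?_⟩
  calc
    _ ↔ (∑ i, |x i|) + |(∑ i, x i) + k| = k := forall_le_iff_eq_of_isLeast_range hmin
    _ ↔ (∀ i ∈ univ, x i ≤ 0) ∧ -k ≤ ∑ i, x i := sum_abs_add_abs_sum_add_eq_iff
    _ ↔ (∀ i, x i ≤ 0) ∧ -k ≤ ∑ i, x i := by simp only [mem_univ, true_imp_iff]

end OrderedGroup

/-- for `n ≥ 1` and `k ≥ 0`, the function
`f(x) = ∑ᵢ |xᵢ| + |∑ᵢ xᵢ + k|` on `ℝⁿ` has minimum value `k`, and its set of minimizers is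
exactly the simplex `{x : xᵢ ≤ 0 ∀i, ∑ᵢ xᵢ ≥ -k}`. -/
theorem stmt11 (n : ℕ) (hn : 1 ≤ n) (k : ℝ) (hk : 0 ≤ k) :
    IsLeast (Set.range fun x : Fin n → ℝ => (∑ i, |x i|) + |(∑ i, x i) + k|) k ∧
    {x : Fin n → ℝ |
        ∀ y : Fin n → ℝ,
          (∑ i, |x i|) + |(∑ i, x i) + k| ≤ (∑ i, |y i|) + |(∑ i, y i) + k|} =
      {x : Fin n → ℝ | (∀ i, x i ≤ 0) ∧ -k ≤ ∑ i, x i} :=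
  stmt11_general hk
end

section
/- Let n ≥ 1 and real constants 0 ≤ k₂ ≤ k₁ be given with k₂ < k₁/(n+1), and define f : ℝⁿ → ℝ by f(x) = max( max_{1≤i≤n} |x_i|, |Σ_{i=1}^n x_i + k₁|, k₂ ). Then f has a unique minimizer over ℝⁿ, namely the point x with x_i = −k₁/(n+1) for all i, and the minimum value of f is k₁/(n+1). -/
open Finset

/-- The function `f(x) = max( maxᵢ |xᵢ|, |∑ᵢ xᵢ + k₁|, k₂ )` on `ℝⁿ`, `n ≥ 1`. -/
noncomputable def fLinf (n : ℕ) (hn : 1 ≤ n) (k₁ k₂ : ℝ) (x : Fin n → ℝ) : ℝ :=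
  max (Finset.univ.sup' (Finset.univ_nonempty_iff.mpr ⟨⟨0, hn⟩⟩) fun i => |x i|)
    (max |(∑ i, x i) + k₁| k₂)

/-!
The `n + 1` numbers `-x₁, …, -xₙ, ∑ᵢ xᵢ + k₁` always sum to `k₁`, so their mean is
`c = k₁ / (n + 1)`, and `f x` is the maximum of `k₂` and the sup norm of the vector they form.
Vectors with mean `c` have sup norm at least `‖c‖`. When the sup norm equals `‖c‖`, all entries
are equal to `c`, because their variance `∑ᵢ ‖vᵢ - c‖² = ∑ᵢ ‖vᵢ‖² - N ‖c‖²` is then nonpositive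
(`N` being the number of entries).
-/

section Mean

variable {ι E : Type*} [Fintype ι] [NormedAddCommGroup E] {v : ι → E} {c : E}

theorem norm_le_pi_norm_of_sum_eq_card_nsmul [NormedSpace ℝ E] [Nonempty ι]
    (hsum : ∑ i, v i = Fintype.card ι • c) : ‖c‖ ≤ ‖v‖ := by
  have hcard : Fintype.card ι • ‖c‖ ≤ Fintype.card ι • ‖v‖ :=
    calc Fintype.card ι • ‖c‖ = ‖∑ i, v i‖ := by rw [hsum, RCLike.norm_nsmul ℝ]
      _ ≤ ∑ i, ‖v i‖ := norm_sum_le _ _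
      _ ≤ Fintype.card ι • ‖v‖ := Pi.sum_norm_apply_le_norm v
  exact le_of_nsmul_le_nsmul_right Fintype.card_ne_zero hcard

variable [InnerProductSpace ℝ E]

theorem sum_norm_sub_sq_of_sum_eq_card_nsmul (hsum : ∑ i, v i = Fintype.card ι • c) :
    ∑ i, ‖v i - c‖ ^ 2 = ∑ i, ‖v i‖ ^ 2 - Fintype.card ι * ‖c‖ ^ 2 := by
  have hinner : ∑ i, inner ℝ (v i) c = Fintype.card ι * ‖c‖ ^ 2 := by
    rw [← sum_inner, hsum, ← Nat.cast_smul_eq_nsmul ℝ, real_inner_smul_left,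
      real_inner_self_eq_norm_sq]
  simp only [norm_sub_sq_real, sum_add_distrib, sum_sub_distrib, ← mul_sum, hinner, sum_const,
    card_univ, nsmul_eq_mul]
  ring

theorem eq_const_of_sum_eq_card_nsmul_of_pi_norm_le (hsum : ∑ i, v i = Fintype.card ι • c)
    (hle : ‖v‖ ≤ ‖c‖) : v = fun _ => c := by
  have hsq : ∑ i, ‖v i‖ ^ 2 ≤ Fintype.card ι * ‖c‖ ^ 2 := by
    rw [← nsmul_eq_mul]
    exact sum_le_card_nsmul _ _ _ fun i _ => by gcongr; exact (norm_le_pi_norm v i).trans hle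
  have hvar : ∑ i, ‖v i - c‖ ^ 2 = 0 := by
    refine le_antisymm ?_ (by positivity)
    rw [sum_norm_sub_sq_of_sum_eq_card_nsmul hsum]
    exact sub_nonpos.mpr hsq
  funext i
  have hi : ‖v i - c‖ ^ 2 = 0 :=
    (sum_eq_zero_iff_of_nonneg fun _ _ => by positivity).mp hvar i (mem_univ i)
  rwa [sq_eq_zero_iff, norm_sub_eq_zero_iff] at hi

end Mean

/-- The vector `(∑ᵢ xᵢ + k, -x₁, …, -xₙ)` of the `n + 1` quantities whose absolute values enter
`fLinf`. The `xᵢ` are negated so that the entries add up to `k` for every `x`. -/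
def residuals {n : ℕ} (k : ℝ) (x : Fin n → ℝ) : Fin (n + 1) → ℝ :=
  Fin.cons (∑ i, x i + k) (-x)

section Residuals

variable {n : ℕ} (k : ℝ) (x : Fin n → ℝ)

theorem sum_residuals :
    ∑ i, residuals k x i = Fintype.card (Fin (n + 1)) • (k / ((n : ℝ) + 1)) := by
  have hsum : ∑ i, residuals k x i = k := by
    simp only [residuals, Fin.sum_cons, Pi.neg_apply, sum_neg_distrib]
    ring
  rw [hsum, Fintype.card_fin, nsmul_eq_mul, Nat.cast_add_one]
  field_simp

theorem residuals_neg_const :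
    residuals k (fun _ : Fin n => -(k / ((n : ℝ) + 1))) = fun _ => k / ((n : ℝ) + 1) := by
  funext i
  cases i using Fin.cases with
  | zero =>
    simp only [residuals, Fin.cons_zero, sum_const, card_univ, Fintype.card_fin, nsmul_eq_mul]
    field_simp
    ring
  | succ i => simp only [residuals, Fin.cons_succ, Pi.neg_apply, neg_neg]

theorem residuals_injective : Function.Injective (residuals k : (Fin n → ℝ) → _) :=
  fun _ _ h => neg_injective (Fin.cons_inj.mp h).2

theorem fLinf_eq_max_norm_residuals (hn : 1 ≤ n) (k₂ : ℝ) :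
    fLinf n hn k k₂ x = max ‖residuals k x‖ k₂ := by
  refine eq_of_forall_ge_iff fun r => ?_
  simp only [fLinf, residuals, max_le_iff, sup'_le_iff, pi_norm_le_iff_of_nonempty,
    Fin.forall_fin_succ, Fin.cons_zero, Fin.cons_succ, Pi.neg_apply, abs_neg, Real.norm_eq_abs,
    mem_univ, true_imp_iff]
  tauto

end Residuals

section Minimizer

variable {n : ℕ} (hn : 1 ≤ n) (k₁ k₂ : ℝ)

theorem fLinf_neg_const :
    fLinf n hn k₁ k₂ (fun _ => -(k₁ / ((n : ℝ) + 1))) = max |k₁ / ((n : ℝ) + 1)| k₂ := by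
  rw [fLinf_eq_max_norm_residuals, residuals_neg_const, pi_norm_const, Real.norm_eq_abs]

theorem max_abs_le_fLinf (x : Fin n → ℝ) :
    max |k₁ / ((n : ℝ) + 1)| k₂ ≤ fLinf n hn k₁ k₂ x := by
  rw [fLinf_eq_max_norm_residuals]
  exact max_le_max_right k₂ (norm_le_pi_norm_of_sum_eq_card_nsmul (sum_residuals k₁ x))

variable {hn k₁ k₂} in
theorem eq_neg_const_of_fLinf_le {x : Fin n → ℝ}
    (hx : fLinf n hn k₁ k₂ x ≤ |k₁ / ((n : ℝ) + 1)|) : x = fun _ => -(k₁ / ((n : ℝ) + 1)) := by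
  rw [fLinf_eq_max_norm_residuals] at hx
  apply residuals_injective k₁
  rw [residuals_neg_const]
  exact eq_const_of_sum_eq_card_nsmul_of_pi_norm_le (sum_residuals k₁ x)
    ((le_max_left _ _).trans hx)

end Minimizer

theorem stmt13_general (n : ℕ) (hn : 1 ≤ n) (k₁ k₂ : ℝ) (hk₂ : k₂ ≤ |k₁ / ((n : ℝ) + 1)|) :
    fLinf n hn k₁ k₂ (fun _ => -(k₁ / ((n : ℝ) + 1))) = |k₁ / ((n : ℝ) + 1)| ∧
    (∀ x : Fin n → ℝ, fLinf n hn k₁ k₂ (fun _ => -(k₁ / ((n : ℝ) + 1))) ≤ fLinf n hn k₁ k₂ x) ∧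
    (∀ x : Fin n → ℝ, (∀ y : Fin n → ℝ, fLinf n hn k₁ k₂ x ≤ fLinf n hn k₁ k₂ y) →
      x = fun _ => -(k₁ / ((n : ℝ) + 1))) := by
  have hmin : fLinf n hn k₁ k₂ (fun _ => -(k₁ / ((n : ℝ) + 1))) = |k₁ / ((n : ℝ) + 1)| := by
    rw [fLinf_neg_const, max_eq_left hk₂]
  refine ⟨hmin, fun x => ?_, fun x hx => eq_neg_const_of_fLinf_le ((hx _).trans_eq hmin)⟩
  exact (fLinf_neg_const hn k₁ k₂).trans_le (max_abs_le_fLinf hn k₁ k₂ x)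

/-- for `0 ≤ k₂ ≤ k₁` with `k₂ < k₁/(n+1)`, the function
`f(x) = max( maxᵢ |xᵢ|, |∑ᵢ xᵢ + k₁|, k₂ )` has a unique minimizer over `ℝⁿ`, namely the
point with all coordinates `-k₁/(n+1)`, and its minimum value is `k₁/(n+1)`. -/
theorem stmt13 (n : ℕ) (hn : 1 ≤ n) (k₁ k₂ : ℝ)
    (hk₂ : 0 ≤ k₂) (hk₁₂ : k₂ ≤ k₁) (hcase : k₂ < k₁ / ((n : ℝ) + 1)) :
    fLinf n hn k₁ k₂ (fun _ => -(k₁ / ((n : ℝ) + 1))) = k₁ / ((n : ℝ) + 1) ∧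
    (∀ x : Fin n → ℝ, fLinf n hn k₁ k₂ (fun _ => -(k₁ / ((n : ℝ) + 1))) ≤ fLinf n hn k₁ k₂ x) ∧
    (∀ x : Fin n → ℝ, (∀ y : Fin n → ℝ, fLinf n hn k₁ k₂ x ≤ fLinf n hn k₁ k₂ y) →
      x = fun _ => -(k₁ / ((n : ℝ) + 1))) := by
  have hc : 0 ≤ k₁ / ((n : ℝ) + 1) := hk₂.trans hcase.le
  simpa only [abs_of_nonneg hc] using stmt13_general n hn k₁ k₂ (hcase.le.trans (le_abs_self _))
end

section
/- Let m₁ and m₂ be mass functions on a finite nonempty set Θ such that pl₁(C) > 0 for every C ⊆ Θ with m₂(C) > 0, where pl₁ is the plausibility of m₁. Then the Dempster combination m₁ ⊕ m₂ is well defined and decomposes as the convex combination m₁ ⊕ m₂ = Σ_{C : m₂(C)>0} μ(C) · (m₁ ⊕ m_C), where m_C is the categorical mass function assigning mass 1 to C, and μ(C) = m₂(C)·pl₁(C) / Σ_{X⊆Θ} m₂(X)·pl₁(X); in particular Σ_C μ(C) = 1 and μ(C) ≥ 0. -/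
open Finset

/-- The Dempster conflict `κ = ∑_{B ∩ C = ∅} m₁(B) m₂(C)`. -/
def conflict {Θ : Type*} [Fintype Θ] [DecidableEq Θ] (m₁ m₂ : Finset Θ → ℝ) : ℝ :=
  ∑ B : Finset Θ, ∑ C : Finset Θ, if B ∩ C = ∅ then m₁ B * m₂ C else 0

/-- The Dempster combination `m₁ ⊕ m₂`:
`(m₁ ⊕ m₂)(A) = (∑_{B ∩ C = A} m₁(B) m₂(C)) / (1 - κ)` for `A ≠ ∅`, and `0` at `∅`. -/
noncomputable def demp {Θ : Type*} [Fintype Θ] [DecidableEq Θ] (m₁ m₂ : Finset Θ → ℝ) :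
    Finset Θ → ℝ :=
  fun A =>
    if A = ∅ then 0
    else (∑ B : Finset Θ, ∑ C : Finset Θ, if B ∩ C = A then m₁ B * m₂ C else 0) /
      (1 - conflict m₁ m₂)

/-- The categorical mass function assigning mass `1` to `C`. -/
def catMass {Θ : Type*} [Fintype Θ] [DecidableEq Θ] (C : Finset Θ) : Finset Θ → ℝ :=
  fun B => if B = C then 1 else 0

/-- The weights `μ(C) = m₂(C) pl₁(C) / ∑_X m₂(X) pl₁(X)` of the convex decomposition. -/
noncomputable def dempWeight {Θ : Type*} [Fintype Θ] [DecidableEq Θ]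
    (m₁ m₂ : Finset Θ → ℝ) (C : Finset Θ) : ℝ :=
  m₂ C * plaus m₁ C / ∑ X : Finset Θ, m₂ X * plaus m₁ X

/-! The unnormalized combination is linear in `m₂ = ∑ C, m₂ C • m_C`, and `m₁` combined with `m_C`
has non-conflicting mass `1 - κ(m₁, m_C) = pl₁(C)`. Averaging over `m₂` gives
`1 - κ = ∑ C, m₂ C * pl₁(C)`, so `μ(C)` is the share of the non-conflicting mass contributed by `C`;
normalizing the linear decomposition produces exactly these weights. -/

section DempsterCombination

variable {Θ : Type*} [Fintype Θ] [DecidableEq Θ] {m m₁ m₂ : Finset Θ → ℝ} {A C : Finset Θ}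

/-- The conjunctive (unnormalized Dempster) combination, `A ↦ ∑_{B ∩ C = A} m₁(B) m₂(C)`. It is the
numerator of `demp` at nonempty `A`; its value at `∅` is the conflict. -/
def conjComb (m₁ m₂ : Finset Θ → ℝ) (A : Finset Θ) : ℝ :=
  ∑ B : Finset Θ, ∑ C : Finset Θ, if B ∩ C = A then m₁ B * m₂ C else 0

theorem conflict_eq_conjComb_empty (m₁ m₂ : Finset Θ → ℝ) :
    conflict m₁ m₂ = conjComb m₁ m₂ ∅ :=
  rfl

theorem demp_empty (m₁ m₂ : Finset Θ → ℝ) : demp m₁ m₂ ∅ = 0 :=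
  if_pos rfl

theorem demp_of_ne_empty (m₁ m₂ : Finset Θ → ℝ) (hA : A ≠ ∅) :
    demp m₁ m₂ A = conjComb m₁ m₂ A / (1 - conflict m₁ m₂) :=
  if_neg hA

theorem conjComb_catMass (m : Finset Θ → ℝ) (C A : Finset Θ) :
    conjComb m (catMass C) A = ∑ B : Finset Θ with B ∩ C = A, m B := by
  simp only [conjComb, catMass, mul_ite, mul_one, mul_zero, sum_filter]
  refine sum_congr rfl fun B _ ↦ ?_
  rw [sum_eq_single C (fun D _ hD ↦ by simp [hD]) (by simp), if_pos rfl]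

theorem conjComb_eq_sum_mul_conjComb_catMass (m₁ m₂ : Finset Θ → ℝ) (A : Finset Θ) :
    conjComb m₁ m₂ A = ∑ C, m₂ C * conjComb m₁ (catMass C) A := by
  simp only [conjComb_catMass, mul_sum, sum_filter, mul_ite, mul_zero]
  rw [conjComb, sum_comm]
  simp only [mul_comm]

theorem one_sub_conflict_catMass (hm : ∑ B, m B = 1) (C : Finset Θ) :
    1 - conflict m (catMass C) = plaus m C := by
  rw [conflict_eq_conjComb_empty, conjComb_catMass, ← hm, sub_eq_iff_eq_add', plaus]
  simp only [nonempty_iff_ne_empty]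
  exact (sum_filter_add_sum_filter_not univ _ m).symm

theorem one_sub_conflict (hm₁ : ∑ B, m₁ B = 1) (hm₂ : ∑ C, m₂ C = 1) :
    1 - conflict m₁ m₂ = ∑ C, m₂ C * plaus m₁ C := by
  simp only [← one_sub_conflict_catMass hm₁, mul_sub, mul_one, sum_sub_distrib, hm₂,
    conflict_eq_conjComb_empty, ← conjComb_eq_sum_mul_conjComb_catMass]

theorem plaus_nonneg (hm : ∀ B, 0 ≤ m B) (C : Finset Θ) : 0 ≤ plaus m C :=
  sum_nonneg fun B _ ↦ hm B

theorem conjComb_catMass_eq_zero_of_plaus_eq_zero (hm : ∀ B, 0 ≤ m B) (hC : plaus m C = 0)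
    (hA : A ≠ ∅) : conjComb m (catMass C) A = 0 := by
  rw [conjComb_catMass]
  refine sum_eq_zero fun B hB ↦ (sum_eq_zero_iff_of_nonneg fun B _ ↦ hm B).1 hC B ?_
  simpa [nonempty_iff_ne_empty, (mem_filter.1 hB).2] using hA

namespace IsMassFun

theorem nonneg (hm : IsMassFun m) (B : Finset Θ) : 0 ≤ m B :=
  hm.2.1 B

theorem sum_eq_one (hm : IsMassFun m) : ∑ B, m B = 1 :=
  hm.2.2

theorem exists_pos (hm : IsMassFun m) : ∃ B, 0 < m B := by
  have hsum : 0 < ∑ B, m B := hm.sum_eq_one ▸ one_pos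
  simpa using (sum_pos_iff_of_nonneg fun B _ ↦ hm.nonneg B).1 hsum

-- If `plaus m C = 0`, then `demp m (catMass C) A` is the junk value `0 / 0 = 0`.
theorem plaus_mul_demp_catMass (hm : IsMassFun m) (hA : A ≠ ∅) :
    plaus m C * demp m (catMass C) A = conjComb m (catMass C) A := by
  rw [demp_of_ne_empty _ _ hA, one_sub_conflict_catMass hm.sum_eq_one]
  exact mul_div_cancel_of_imp' fun hC ↦
    conjComb_catMass_eq_zero_of_plaus_eq_zero hm.nonneg hC hA

end IsMassFun

theorem conflict_lt_one_iff (hm₁ : IsMassFun m₁) (hm₂ : IsMassFun m₂) :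
    conflict m₁ m₂ < 1 ↔ ∃ C, 0 < m₂ C ∧ 0 < plaus m₁ C := by
  have hterm (C : Finset Θ) : 0 ≤ m₂ C * plaus m₁ C :=
    mul_nonneg (hm₂.nonneg C) (plaus_nonneg hm₁.nonneg C)
  rw [← sub_pos, one_sub_conflict hm₁.sum_eq_one hm₂.sum_eq_one,
    sum_pos_iff_of_nonneg fun C _ ↦ hterm C]
  simp only [mem_univ, true_and]
  exact exists_congr fun C ↦ ⟨fun h ↦ ⟨pos_of_mul_pos_left h (plaus_nonneg hm₁.nonneg C),
    pos_of_mul_pos_right h (hm₂.nonneg C)⟩, fun h ↦ mul_pos h.1 h.2⟩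

theorem dempWeight_nonneg (hm₁ : ∀ B, 0 ≤ m₁ B) (hm₂ : ∀ B, 0 ≤ m₂ B) (C : Finset Θ) :
    0 ≤ dempWeight m₁ m₂ C :=
  have hterm (X : Finset Θ) : 0 ≤ m₂ X * plaus m₁ X := mul_nonneg (hm₂ X) (plaus_nonneg hm₁ X)
  div_nonneg (hterm C) (sum_nonneg fun X _ ↦ hterm X)

theorem pos_and_plaus_pos_of_dempWeight_ne_zero (hm₁ : ∀ B, 0 ≤ m₁ B) (hm₂ : ∀ B, 0 ≤ m₂ B)
    (hC : dempWeight m₁ m₂ C ≠ 0) : 0 < m₂ C ∧ 0 < plaus m₁ C := by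
  have hnum : m₂ C * plaus m₁ C ≠ 0 := (div_ne_zero_iff.1 hC).1
  exact ⟨(hm₂ C).lt_of_ne' (left_ne_zero_of_mul hnum),
    (plaus_nonneg hm₁ C).lt_of_ne' (right_ne_zero_of_mul hnum)⟩

theorem sum_dempWeight_eq_one (h : ∑ C, m₂ C * plaus m₁ C ≠ 0) : ∑ C, dempWeight m₁ m₂ C = 1 := by
  simp only [dempWeight, ← sum_div, div_self h]

-- In total conflict, `κ = 1`, both sides are `0` by division by zero.
theorem demp_eq_sum_dempWeight_mul (hm₁ : IsMassFun m₁) (hm₂ : ∑ C, m₂ C = 1) (A : Finset Θ) :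
    demp m₁ m₂ A = ∑ C, dempWeight m₁ m₂ C * demp m₁ (catMass C) A := by
  obtain rfl | hA := eq_or_ne A ∅
  · simp only [demp_empty, mul_zero, sum_const_zero]
  calc demp m₁ m₂ A
      = (∑ C, m₂ C * conjComb m₁ (catMass C) A) / ∑ X, m₂ X * plaus m₁ X := by
        rw [demp_of_ne_empty _ _ hA, one_sub_conflict hm₁.sum_eq_one hm₂,
          conjComb_eq_sum_mul_conjComb_catMass]
    _ = (∑ C, m₂ C * (plaus m₁ C * demp m₁ (catMass C) A)) / ∑ X, m₂ X * plaus m₁ X := by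
        simp only [hm₁.plaus_mul_demp_catMass hA]
    _ = ∑ C, dempWeight m₁ m₂ C * demp m₁ (catMass C) A := by
        simp only [dempWeight, sum_div, ← mul_assoc, div_mul_eq_mul_div]

end DempsterCombination

theorem stmt16_general {Θ : Type*} [Fintype Θ] [DecidableEq Θ]
    (m₁ m₂ : Finset Θ → ℝ) (hm₁ : IsMassFun m₁) (hm₂ : IsMassFun m₂) (hκ : conflict m₁ m₂ < 1) :
    (∀ C : Finset Θ, 0 ≤ dempWeight m₁ m₂ C) ∧
    (∑ C : Finset Θ with 0 < m₂ C ∧ 0 < plaus m₁ C, dempWeight m₁ m₂ C = 1) ∧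
    (∀ X : Finset Θ,
      demp m₁ m₂ X =
        ∑ C : Finset Θ with 0 < m₂ C ∧ 0 < plaus m₁ C,
          dempWeight m₁ m₂ C * demp m₁ (catMass C) X) := by
  have hsupp {C : Finset Θ} (hC : dempWeight m₁ m₂ C ≠ 0) : 0 < m₂ C ∧ 0 < plaus m₁ C :=
    pos_and_plaus_pos_of_dempWeight_ne_zero hm₁.nonneg hm₂.nonneg hC
  have htotal : ∑ C, m₂ C * plaus m₁ C ≠ 0 :=
    one_sub_conflict hm₁.sum_eq_one hm₂.sum_eq_one ▸ (sub_pos.2 hκ).ne'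
  refine ⟨dempWeight_nonneg hm₁.nonneg hm₂.nonneg, ?_, fun X ↦ ?_⟩
  · rw [sum_filter_of_ne fun C _ ↦ hsupp, sum_dempWeight_eq_one htotal]
  · rw [sum_filter_of_ne fun C _ hC ↦ hsupp (left_ne_zero_of_mul hC),
      demp_eq_sum_dempWeight_mul hm₁ hm₂.sum_eq_one]

/-- if `pl₁(C) > 0` whenever `m₂(C) > 0`, then the Dempster combination
`m₁ ⊕ m₂` is well defined (`κ < 1`) and decomposes as the convex combination
`m₁ ⊕ m₂ = ∑_{C : m₂(C) > 0} μ(C) · (m₁ ⊕ m_C)` with `μ(C) ≥ 0` and `∑ μ(C) = 1`. -/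
theorem stmt16 {Θ : Type*} [Fintype Θ] [DecidableEq Θ] [Nonempty Θ]
    (m₁ m₂ : Finset Θ → ℝ) (hm₁ : IsMassFun m₁) (hm₂ : IsMassFun m₂)
    (hpl : ∀ C : Finset Θ, 0 < m₂ C → 0 < plaus m₁ C) :
    conflict m₁ m₂ < 1 ∧
    (∀ C : Finset Θ, 0 ≤ dempWeight m₁ m₂ C) ∧
    (∑ C ∈ Finset.univ.filter (fun C : Finset Θ => 0 < m₂ C), dempWeight m₁ m₂ C = 1) ∧
    (∀ X : Finset Θ,
      demp m₁ m₂ X =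
        ∑ C ∈ Finset.univ.filter (fun C : Finset Θ => 0 < m₂ C),
          dempWeight m₁ m₂ C * demp m₁ (catMass C) X) := by
  have hκ : conflict m₁ m₂ < 1 :=
    (conflict_lt_one_iff hm₁ hm₂).2 (hm₂.exists_pos.imp fun C hC ↦ ⟨hC, hpl C hC⟩)
  exact ⟨hκ, by simpa only [and_iff_left_of_imp (hpl _)] using stmt16_general m₁ m₂ hm₁ hm₂ hκ⟩
end
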